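/- arXiv:2305.00505 — 6 statements merged into one kernel-verified Lean document; each statement's English description precedes it below -/
import Mathlib

section
/- Let V : ℝ → ℝ be differentiable and nonnegative on [0, ∞), and let k₁ > 0, k₂ > 0, δ > 0, 0 < γ < 1, β > 1, and 0 < θ < 1 be constants such that for all t ≥ 0, V'(t) ≤ -k₁·V(t)^γ - k₂·V(t)^β + δ. Set T* = 1/(k₁(1-θ)(1-γ)) + 1/(k₂(1-θ)(β-1)). Then for all t ≥ T*, V(t) ≤ min{(δ/(k₁θ))^(1/γ), (δ/(k₂θ))^(1/β)}. -/
lemma fxt_aux (V : ℝ → ℝ) (a b γ β m : ℝ)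
    (ha : 0 < a) (hb : 0 < b) (hγ₁ : γ < 1) (hβ : 1 < β) (hm : 0 < m)
    (hd : ∀ t : ℝ, 0 ≤ t → DifferentiableAt ℝ V t)
    (hi : ∀ t : ℝ, 0 ≤ t → m ≤ V t → deriv V t ≤ -(a * (V t) ^ γ + b * (V t) ^ β)) :
    ∀ t : ℝ, 1 / (a * (1 - γ)) + 1 / (b * (β - 1)) ≤ t → V t ≤ m := by
  intro t ht
  by_contra! hVt
  have hγ' : 0 < 1 - γ := by linarith
  have hβ' : 0 < β - 1 := by linarith
  have h1 : 0 < 1 / (b * (β - 1)) := by positivity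
  have h2 : 0 < 1 / (a * (1 - γ)) := by positivity
  set t₁ := 1 / (b * (β - 1)) with ht₁
  have hbig : ∀ s, 0 ≤ s → s ≤ t → m < V s := by
    intro s hs hst
    by_contra! hVs
    have := image_le_of_deriv_right_lt_deriv_boundary (f := V) (f' := deriv V) (a := s) (b := t)
      (B := fun _ => m) (B' := fun _ => 0)
      (fun x hx => (hd x (hs.trans hx.1)).continuousAt.continuousWithinAt)
      (fun x hx => (hd x (hs.trans hx.1)).hasDerivAt.hasDerivWithinAt)
      hVs (fun x => hasDerivAt_const x m)
      (by
        intro x hx hxm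
        have h := hi x (hs.trans hx.1) hxm.ge
        have hp : 0 < V x := by rw [hxm]; exact hm
        have : 0 < a * (V x) ^ γ + b * (V x) ^ β := by positivity
        linarith)
      (x := t) ⟨hst, le_rfl⟩
    linarith
  have hpos : ∀ s, 0 ≤ s → s ≤ t → 0 < V s := fun s h h' => hm.trans (hbig s h h')
  have hW : ∀ p s : ℝ, 0 ≤ s → s ≤ t →
      HasDerivAt (fun x => V x ^ p) (deriv V s * p * V s ^ (p - 1)) s := by
    intro p s h h'
    exact (hd s h).hasDerivAt.rpow_const (Or.inl (hpos s h h').ne')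
  have hmul : ∀ p q s : ℝ, 0 ≤ s → s ≤ t → p + q = 1 → V s ^ p * V s ^ (q - 1) = 1 := by
    intro p q s h h' hpq
    rw [← Real.rpow_add (hpos s h h'), show p + (q - 1) = 0 by linarith, Real.rpow_zero]
  have ht₁t : t₁ ≤ t := by linarith
  -- stage 1
  have hs1 : V t₁ < 1 := by
    have key := (convex_Icc (0:ℝ) t₁).mul_sub_le_image_sub_of_le_deriv
      (f := fun x => V x ^ (1 - β)) (C := b * (β - 1))
      (fun x hx => (hW _ x hx.1 (hx.2.trans ht₁t)).continuousAt.continuousWithinAt)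
      (fun x hx => by
        rw [interior_Icc] at hx
        exact (hW _ x hx.1.le (hx.2.le.trans ht₁t)).differentiableAt.differentiableWithinAt)
      (fun x hx => by
        rw [interior_Icc] at hx
        have hx0 := hx.1.le
        have hxt := hx.2.le.trans ht₁t
        rw [(hW _ x hx0 hxt).deriv]
        have h := hi x hx0 (hbig x hx0 hxt).le
        have hp := hpos x hx0 hxt
        have e := hmul β (1 - β) x hx0 hxt (by ring)
        have hA : 0 < a * V x ^ γ := by positivity
        have hc : 0 < (β - 1) * V x ^ (1 - β - 1) := by positivity
        have := mul_le_mul_of_nonneg_right (show b * V x ^ β ≤ - deriv V x by linarith) hc.le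
        calc b * (β - 1) = b * (β - 1) * (V x ^ β * V x ^ (1 - β - 1)) := by rw [e, mul_one]
          _ = b * V x ^ β * ((β - 1) * V x ^ (1 - β - 1)) := by ring
          _ ≤ _ := this
          _ = _ := by ring)
      0 ⟨le_rfl, h1.le⟩ t₁ ⟨h1.le, le_rfl⟩ h1.le
    have e1 : b * (β - 1) * (t₁ - 0) = 1 := by rw [ht₁]; field_simp; simp
    rw [e1] at key
    have h0 : 0 < V 0 ^ (1 - β) := Real.rpow_pos_of_pos (hpos 0 le_rfl (h1.le.trans ht₁t)) _
    by_contra! hc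
    have := Real.rpow_le_one_of_one_le_of_nonpos hc (show 1 - β ≤ 0 by linarith)
    linarith
  have key := (convex_Icc t₁ t).image_sub_le_mul_sub_of_deriv_le
      (f := fun x => V x ^ (1 - γ)) (C := - (a * (1 - γ)))
      (fun x hx => (hW _ x (h1.le.trans hx.1) hx.2).continuousAt.continuousWithinAt)
      (fun x hx => by
        rw [interior_Icc] at hx
        exact (hW _ x (h1.le.trans hx.1.le) hx.2.le).differentiableAt.differentiableWithinAt)
      (fun x hx => by
        rw [interior_Icc] at hx
        have hx0 := h1.le.trans hx.1.le
        have hxt := hx.2.le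
        rw [(hW _ x hx0 hxt).deriv]
        have h := hi x hx0 (hbig x hx0 hxt).le
        have hp := hpos x hx0 hxt
        have e := hmul γ (1 - γ) x hx0 hxt (by ring)
        have hA : 0 < b * V x ^ β := by positivity
        have hc : 0 < (1 - γ) * V x ^ (1 - γ - 1) := by positivity
        have := mul_le_mul_of_nonneg_right (show deriv V x ≤ -(a * V x ^ γ) by linarith) hc.le
        calc _ = deriv V x * ((1 - γ) * V x ^ (1 - γ - 1)) := by ring
          _ ≤ _ := this
          _ = -(a * (1 - γ)) * (V x ^ γ * V x ^ (1 - γ - 1)) := by ring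
          _ = _ := by rw [e, mul_one])
      t₁ ⟨le_rfl, ht₁t⟩ t ⟨ht₁t, le_rfl⟩ ht₁t
  have e2 : 1 ≤ a * (1 - γ) * (t - t₁) := by
    have : a * (1 - γ) * (1 / (a * (1 - γ))) = 1 := by field_simp
    have h5 : 1 / (a * (1 - γ)) ≤ t - t₁ := by linarith
    exact this.symm.le.trans (mul_le_mul_of_nonneg_left h5 (by positivity))
  have h3 : V t₁ ^ (1 - γ) < 1 := Real.rpow_lt_one (hpos t₁ h1.le ht₁t).le hs1 hγ'
  have h4 : 0 < V t ^ (1 - γ) := Real.rpow_pos_of_pos (hpos t (h1.le.trans ht₁t) le_rfl) _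
  linarith

/-- Practical fixed-time stability comparison lemma (Lemma 1):
if `V` is nonnegative and differentiable on `[0, ∞)` and satisfies
`V' ≤ -k₁ V^γ - k₂ V^β + δ` there, then after the explicit settling time
`T* = 1/(k₁(1-θ)(1-γ)) + 1/(k₂(1-θ)(β-1))` the value `V t` stays in the
explicit residual set. -/
theorem stmt_0 (V : ℝ → ℝ) (k₁ k₂ δ γ β θ : ℝ)
    (hk₁ : 0 < k₁) (hk₂ : 0 < k₂) (hδ : 0 < δ)
    (hγ₀ : 0 < γ) (hγ₁ : γ < 1) (hβ : 1 < β) (hθ₀ : 0 < θ) (hθ₁ : θ < 1)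
    (hVdiff : ∀ t : ℝ, 0 ≤ t → DifferentiableAt ℝ V t)
    (hVnonneg : ∀ t : ℝ, 0 ≤ t → 0 ≤ V t)
    (hVineq : ∀ t : ℝ, 0 ≤ t →
      deriv V t ≤ -k₁ * (V t) ^ γ - k₂ * (V t) ^ β + δ) :
    ∀ t : ℝ, 1 / (k₁ * (1 - θ) * (1 - γ)) + 1 / (k₂ * (1 - θ) * (β - 1)) ≤ t →
      V t ≤ min ((δ / (k₁ * θ)) ^ (1 / γ)) ((δ / (k₂ * θ)) ^ (1 / β)) := by
  intro t ht
  have hθ' : 0 < 1 - θ := by linarith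
  have main : ∀ m, 0 < m → (∀ v, m ≤ v → δ ≤ θ * (k₁ * v ^ γ + k₂ * v ^ β)) → V t ≤ m := by
    intro m hm hv
    refine fxt_aux V (k₁ * (1 - θ)) (k₂ * (1 - θ)) γ β m (by positivity) (by positivity)
      hγ₁ hβ hm hVdiff ?_ t ht
    intro s hs hms
    have h1 := hVineq s hs
    have h2 := hv _ hms
    linarith
  have root : ∀ k p v : ℝ, 0 < k → 0 < p → (δ / (k * θ)) ^ (1 / p) ≤ v → δ ≤ θ * (k * v ^ p) := by
    intro k p v hk hp hv
    have h0 : 0 ≤ δ / (k * θ) := by positivity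
    have h := Real.rpow_le_rpow (by positivity) hv hp.le
    rw [← Real.rpow_mul h0, one_div_mul_cancel hp.ne', Real.rpow_one,
      div_le_iff₀ (by positivity)] at h
    linarith
  refine le_min (main _ (by positivity) ?_) (main _ (by positivity) ?_)
  · intro v hv
    have h := root k₁ γ v hk₁ hγ₀ hv
    have hv0 : 0 ≤ v := le_trans (by positivity) hv
    have : 0 ≤ θ * (k₂ * v ^ β) := by positivity
    linarith
  · intro v hv
    have h := root k₂ β v hk₂ (by linarith) hv
    have hv0 : 0 ≤ v := le_trans (by positivity) hv
    have : 0 ≤ θ * (k₁ * v ^ γ) := by positivity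
    linarith
end

section
/- Let h₁ > 0 and h₂ > 0 and let ξ be the nonlinear transformation function. For all x, y with -h₁ < x < h₂ and -h₁ < y < h₂, one has |x - y| ≤ |ξ(x) - ξ(y)|. -/
theorem aux_mono (h₁ h₂ : ℝ) :
    MonotoneOn (fun z : ℝ => ((h₁ + h₂) / 4) * (Real.log (h₁ + z) - Real.log (h₂ - z)) - z)
      (Set.Ioo (-h₁) h₂) := by
  have hd : ∀ z ∈ Set.Ioo (-h₁) h₂,
      HasDerivAt (fun z : ℝ => ((h₁ + h₂) / 4) * (Real.log (h₁ + z) - Real.log (h₂ - z)) - z)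
        (((h₁ + h₂) / 4) * (1 / (h₁ + z) - (-1) / (h₂ - z)) - 1) z := by
    intro z hz
    have p1 : h₁ + z ≠ 0 := by linarith [hz.1]
    have p2 : h₂ - z ≠ 0 := by linarith [hz.2]
    exact (((((hasDerivAt_id z).const_add h₁).log p1).sub
      (((hasDerivAt_id z).const_sub h₂).log p2)).const_mul _).sub (hasDerivAt_id z)
  apply monotoneOn_of_deriv_nonneg (convex_Ioo _ _)
  · exact fun z hz => (hd z hz).continuousAt.continuousWithinAt
  · rw [interior_Ioo]
    exact fun z hz => (hd z hz).differentiableAt.differentiableWithinAt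
  · rw [interior_Ioo]
    intro z hz
    rw [(hd z hz).deriv]
    have p1 : 0 < h₁ + z := by linarith [hz.1]
    have p2 : 0 < h₂ - z := by linarith [hz.2]
    have e : ((h₁ + h₂) / 4) * (1 / (h₁ + z) - (-1) / (h₂ - z)) - 1
        = ((h₁ + z) - (h₂ - z)) ^ 2 / (4 * ((h₁ + z) * (h₂ - z))) := by
      field_simp
      ring
    rw [e]
    positivity

/-- Key estimate of Appendix B: the nonlinear transformation function
`ξ` expands distances, i.e. `|x - y| ≤ |ξ(x) - ξ(y)|` on `(-h₁, h₂)`. -/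
theorem stmt_9 (h₁ h₂ : ℝ) (hh₁ : 0 < h₁) (hh₂ : 0 < h₂)
    (ξ : ℝ → ℝ)
    (hξ : ∀ z ∈ Set.Ioo (-h₁) h₂,
      ξ z = ((h₁ + h₂) / 4) * Real.log ((h₁ + z) / (h₂ - z)))
    (x y : ℝ) (hx : x ∈ Set.Ioo (-h₁) h₂) (hy : y ∈ Set.Ioo (-h₁) h₂) :
    |x - y| ≤ |ξ x - ξ y| := by
  have key : ∀ a ∈ Set.Ioo (-h₁) h₂, ∀ b ∈ Set.Ioo (-h₁) h₂, a ≤ b → b - a ≤ ξ b - ξ a := by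
    intro a ha b hb hab
    have h := aux_mono h₁ h₂ ha hb hab
    have a1 : h₁ + a ≠ 0 := by linarith [ha.1]
    have a2 : h₂ - a ≠ 0 := by linarith [ha.2]
    have b1 : h₁ + b ≠ 0 := by linarith [hb.1]
    have b2 : h₂ - b ≠ 0 := by linarith [hb.2]
    rw [hξ a ha, hξ b hb, Real.log_div a1 a2, Real.log_div b1 b2]
    simp only at h
    linarith
  rcases le_total x y with h | h
  · rw [abs_sub_comm x y, abs_sub_comm (ξ x), abs_of_nonneg (sub_nonneg.2 h)]
    exact (key x hx y hy h).trans (le_abs_self _)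
  · rw [abs_of_nonneg (sub_nonneg.2 h)]
    exact (key y hy x hx h).trans (le_abs_self _)
end

section
/- For all real numbers a ≥ 0, â ≥ 0 and r > 0, one has â^r · (a - â) ≤ (2/(1+r)) · a^(1+r) - (1/(1+r)) · |a - â|^(1+r), where all powers are real powers of nonnegative bases. -/
/-- Combined adaptive-parameter estimate (inequalities (22), (36), (37)):
for `a, â ≥ 0` and `r > 0`,
`â^r (a - â) ≤ (2/(1+r)) a^(1+r) - (1/(1+r)) |a - â|^(1+r)`. -/
theorem stmt_12 (a ahat r : ℝ) (ha : 0 ≤ a) (hahat : 0 ≤ ahat) (hr : 0 < r) :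
    ahat ^ r * (a - ahat) ≤
      (2 / (1 + r)) * a ^ (1 + r) - (1 / (1 + r)) * |a - ahat| ^ (1 + r) := by
  have hp : 0 < 1 + r := by linarith
  have hc : (1 + r).HolderConjugate ((1 + r) / r) := by
    rw [Real.holderConjugate_iff]
    refine ⟨by linarith, ?_⟩
    field_simp
  have hy := Real.young_inequality_of_nonneg ha (Real.rpow_nonneg hahat r) hc
  have e1 : (ahat ^ r) ^ ((1 + r) / r) = ahat ^ (1 + r) := by
    rw [← Real.rpow_mul hahat]
    congr 1
    field_simp
  have e2 : ahat ^ (1 + r) = ahat * ahat ^ r := by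
    rw [Real.rpow_add_of_nonneg hahat zero_le_one hr.le, Real.rpow_one]
  rw [e1] at hy
  have hx : 0 ≤ ahat ^ (1 + r) := Real.rpow_nonneg hahat _
  have hA : 0 ≤ a ^ (1 + r) := Real.rpow_nonneg ha _
  have hm : |a - ahat| ^ (1 + r) ≤ a ^ (1 + r) + ahat ^ (1 + r) := by
    rcases le_total ahat a with h | h
    · have := Real.rpow_le_rpow (abs_nonneg (a - ahat))
        (show |a - ahat| ≤ a by rw [abs_le]; constructor <;> linarith) hp.le
      linarith
    · have := Real.rpow_le_rpow (abs_nonneg (a - ahat))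
        (show |a - ahat| ≤ ahat by rw [abs_le]; constructor <;> linarith) hp.le
      linarith
  have h3 : ahat ^ r * (a - ahat) = a * ahat ^ r - ahat ^ (1 + r) := by rw [e2]; ring
  rw [h3]
  generalize ahat ^ (1 + r) = X at *
  generalize a ^ (1 + r) = A at *
  generalize |a - ahat| ^ (1 + r) = D at *
  have h4 : A / (1 + r) + X / ((1 + r) / r) - X = (A - X) / (1 + r) := by
    field_simp
    ring
  have h5 : 2 / (1 + r) * A - 1 / (1 + r) * D = (2 * A - D) / (1 + r) := by ring
  have h6 : (A - X) / (1 + r) ≤ (2 * A - D) / (1 + r) :=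
    div_le_div_of_nonneg_right (by linarith) hp.le
  linarith
end

section
/- Let 0 < r₁ < 1 < r₂ and 0 < λ < 2. Then for all real numbers y and ν: y²/4 + y·( -(1/λ)·(s_{r₁}(y) + s_{r₂}(y) + y) - ν ) ≤ -(1/λ)·|y|^(1+r₁) - (1/λ)·|y|^(1+r₂) + ν², where s_r(y) = Real.sign y · |y|^r is the signed power and all powers of nonnegative numbers are Real.rpow. -/
/-- The signed power `s_r(y) = sign(y) · |y|^r`. -/
noncomputable def signedPow (r y : ℝ) : ℝ := Real.sign y * |y| ^ r

theorem mul_signedPow_aux (r y : ℝ) (hr : 0 < r) : y * signedPow r y = |y| ^ (1 + r) := by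
  unfold signedPow
  rcases eq_or_ne y 0 with h | h
  · subst h
    rw [abs_zero, Real.zero_rpow (show 1 + r ≠ 0 by linarith)]
    simp
  · rw [Real.rpow_add (abs_pos.mpr h), Real.rpow_one, ← mul_assoc]
    congr 1
    rcases lt_or_gt_of_ne h with h | h
    · rw [Real.sign_of_neg h, abs_of_neg h]; ring
    · rw [Real.sign_of_pos h, abs_of_pos h]; ring

/-- Inequality (23)/(38): the filter-error bound for the fixed-time dynamic
surface control law.  For `0 < r₁ < 1 < r₂` and `0 < λ < 2`,
`y²/4 + y(-(1/λ)(s_{r₁}(y) + s_{r₂}(y) + y) - ν)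
  ≤ -(1/λ)|y|^(1+r₁) - (1/λ)|y|^(1+r₂) + ν²`. -/
theorem stmt_13 (r₁ r₂ lam : ℝ) (hr₁₀ : 0 < r₁) (hr₁₁ : r₁ < 1)
    (hr₂ : 1 < r₂) (hlam₀ : 0 < lam) (hlam₂ : lam < 2) (y ν : ℝ) :
    y ^ 2 / 4 +
      y * (-(1 / lam) * (signedPow r₁ y + signedPow r₂ y + y) - ν) ≤
    -(1 / lam) * |y| ^ (1 + r₁) - (1 / lam) * |y| ^ (1 + r₂) + ν ^ 2 := by
  have h1 := mul_signedPow_aux r₁ y hr₁₀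
  have h2 := mul_signedPow_aux r₂ y (by linarith)
  rw [← h1, ← h2]
  have hl : 1 / 2 < 1 / lam := one_div_lt_one_div_of_lt hlam₀ hlam₂
  nlinarith [mul_nonneg (sub_nonneg.mpr hl.le) (sq_nonneg y), sq_nonneg (y / 2 + ν)]
end

section
/- Let σ₁ ≥ 0, σ₂ ≥ 0, r₁ > 0, r₂ > 0, let g : ℝ → ℝ be continuous with g(t) ≥ 0 for all t ≥ 0, and let â : ℝ → ℝ be differentiable on [0, ∞) with â'(t) = g(t) - σ₁·s_{r₁}(â(t)) - σ₂·s_{r₂}(â(t)) for all t ≥ 0, where s_r(y) = Real.sign y · |y|^r. If â(0) ≥ 0, then â(t) ≥ 0 for all t ≥ 0. -/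
/-- The adaptive laws (17), (31), (42) keep the parameter estimate
nonnegative: if `â' = g - σ₁ s_{r₁}(â) - σ₂ s_{r₂}(â)` on `[0, ∞)` with
continuous `g ≥ 0` and `â(0) ≥ 0`, then `â(t) ≥ 0` for all `t ≥ 0`. -/
theorem stmt_14 (σ₁ σ₂ r₁ r₂ : ℝ) (hσ₁ : 0 ≤ σ₁) (hσ₂ : 0 ≤ σ₂)
    (hr₁ : 0 < r₁) (hr₂ : 0 < r₂)
    (g : ℝ → ℝ) (hg : Continuous g) (hgpos : ∀ t : ℝ, 0 ≤ t → 0 ≤ g t)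
    (ahat : ℝ → ℝ)
    (hode : ∀ t : ℝ, 0 ≤ t →
      HasDerivAt ahat
        (g t - σ₁ * signedPow r₁ (ahat t) - σ₂ * signedPow r₂ (ahat t)) t)
    (h0 : 0 ≤ ahat 0) :
    ∀ t : ℝ, 0 ≤ t → 0 ≤ ahat t := by
  intro t ht
  have hs : ∀ r y : ℝ, y < 0 → signedPow r y ≤ 0 := by
    intro r y hy
    unfold signedPow
    rw [Real.sign_of_neg hy]
    have := Real.rpow_nonneg (abs_nonneg y) r
    linarith
  by_contra hneg
  push Not at hneg
  have hε : 0 < -ahat t / (2 * (t + 1)) := div_pos (by linarith) (by linarith)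
  set ε := -ahat t / (2 * (t + 1)) with hεdef
  have hεt : ε * (2 * (t + 1)) = -ahat t := by
    rw [hεdef]; field_simp
  have key := image_le_of_deriv_right_lt_deriv_boundary (f := fun x => -ahat x)
    (f' := fun x => -(g x - σ₁ * signedPow r₁ (ahat x) - σ₂ * signedPow r₂ (ahat x)))
    (a := 0) (b := t) (B := fun x => ε * (x + 1)) (B' := fun _ => ε)
    (fun x hx => (hode x hx.1).neg.continuousAt.continuousWithinAt)
    (fun x hx => (hode x hx.1).neg.hasDerivWithinAt)
    (by linarith)
    (fun x => by simpa using ((hasDerivAt_id x).add_const 1).const_mul ε)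
    (fun x hx hfx => by
      have hpos : 0 < ε * (x + 1) := mul_pos hε (by linarith [hx.1])
      have hax : ahat x < 0 := by linarith
      have h1 := mul_nonneg hσ₁ (neg_nonneg.2 (hs r₁ _ hax))
      have h2 := mul_nonneg hσ₂ (neg_nonneg.2 (hs r₂ _ hax))
      have h3 := hgpos x hx.1
      linarith)
  have h := key (Set.right_mem_Icc.2 ht)
  linarith
end

section
/- Let h₁, h₂ : ℝ → ℝ be continuous with h₁(t) > 0 and h₂(t) > 0 for all t ≥ 0, let x : ℝ → ℝ be continuous, and let M > 0. Suppose -h₁(0) < x(0) < h₂(0), and suppose that for every t ≥ 0 at which -h₁(t) < x(t) < h₂(t) one has |((h₁(t) + h₂(t))/4) · Real.log((h₁(t) + x(t))/(h₂(t) - x(t)))| ≤ M. Then -h₁(t) < x(t) < h₂(t) for all t ≥ 0. -/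
/-- Along a continuous trajectory starting strictly inside the time-varying
constraint interval, boundedness of the transformed variable
`ξ(t) = ((h₁(t)+h₂(t))/4)·log((h₁(t)+x(t))/(h₂(t)-x(t)))` guarantees that the
constraint `-h₁(t) < x(t) < h₂(t)` is never violated. -/
theorem stmt_16 (h₁ h₂ x : ℝ → ℝ) (M : ℝ) (hM : 0 < M)
    (hch₁ : Continuous h₁) (hch₂ : Continuous h₂) (hcx : Continuous x)
    (hh₁pos : ∀ t : ℝ, 0 ≤ t → 0 < h₁ t) (hh₂pos : ∀ t : ℝ, 0 ≤ t → 0 < h₂ t)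
    (h0 : -h₁ 0 < x 0 ∧ x 0 < h₂ 0)
    (hbound : ∀ t : ℝ, 0 ≤ t → (-h₁ t < x t ∧ x t < h₂ t) →
      |((h₁ t + h₂ t) / 4) * Real.log ((h₁ t + x t) / (h₂ t - x t))| ≤ M) :
    ∀ t : ℝ, 0 ≤ t → -h₁ t < x t ∧ x t < h₂ t := by
  have hm : ∀ t : ℝ, 0 ≤ max t 0 := fun t => le_max_right t 0
  have hcm : Continuous (fun t : ℝ => max t 0) := continuous_id.max continuous_const
  have c1 : Continuous (fun t : ℝ => h₁ (max t 0)) := hch₁.comp hcm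
  have c2 : Continuous (fun t : ℝ => h₂ (max t 0)) := hch₂.comp hcm
  have cx : Continuous (fun t : ℝ => x (max t 0)) := hcx.comp hcm
  have cE : Continuous (fun t : ℝ => Real.exp (4 * M / (h₁ (max t 0) + h₂ (max t 0)))) := by
    refine Real.continuous_exp.comp (continuous_const.div (c1.add c2) ?_)
    intro t
    exact (add_pos (hh₁pos _ (hm t)) (hh₂pos _ (hm t))).ne'
  have key : ∀ t : ℝ, 0 ≤ t → ((-h₁ t < x t ∧ x t < h₂ t) ↔
      (h₁ t + x t ≤ Real.exp (4 * M / (h₁ t + h₂ t)) * (h₂ t - x t) ∧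
       h₂ t - x t ≤ Real.exp (4 * M / (h₁ t + h₂ t)) * (h₁ t + x t))) := by
    intro t ht
    have p1 := hh₁pos t ht
    have p2 := hh₂pos t ht
    have hs : 0 < h₁ t + h₂ t := add_pos p1 p2
    have hE := Real.exp_pos (4 * M / (h₁ t + h₂ t))
    constructor
    · intro h
      have hb := hbound t ht h
      have ha : 0 < h₁ t + x t := by linarith [h.1]
      have hb' : 0 < h₂ t - x t := by linarith [h.2]
      rw [Real.log_div ha.ne' hb'.ne', abs_le] at hb
      have e1 : Real.log (h₁ t + x t) ≤ 4 * M / (h₁ t + h₂ t) + Real.log (h₂ t - x t) := by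
        rw [← sub_le_iff_le_add, le_div_iff₀ hs]
        linarith [hb.2]
      have e2 : Real.log (h₂ t - x t) ≤ 4 * M / (h₁ t + h₂ t) + Real.log (h₁ t + x t) := by
        rw [← sub_le_iff_le_add, le_div_iff₀ hs]
        linarith [hb.1]
      constructor
      · have := Real.exp_le_exp.mpr e1
        rwa [Real.exp_add, Real.exp_log ha, Real.exp_log hb'] at this
      · have := Real.exp_le_exp.mpr e2
        rwa [Real.exp_add, Real.exp_log ha, Real.exp_log hb'] at this
    · rintro ⟨q1, q2⟩
      constructor
      · by_contra hc
        have : Real.exp (4 * M / (h₁ t + h₂ t)) * (h₁ t + x t) ≤ 0 :=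
          mul_nonpos_of_nonneg_of_nonpos hE.le (by linarith)
        linarith
      · by_contra hc
        have : Real.exp (4 * M / (h₁ t + h₂ t)) * (h₂ t - x t) ≤ 0 :=
          mul_nonpos_of_nonneg_of_nonpos hE.le (by linarith)
        linarith
  have hclopen : IsClopen {t : ℝ | -h₁ (max t 0) < x (max t 0) ∧ x (max t 0) < h₂ (max t 0)} := by
    constructor
    · simp only [key _ (hm _)]
      exact (isClosed_le (c1.add cx) (cE.mul (c2.sub cx))).inter
        (isClosed_le (c2.sub cx) (cE.mul (c1.add cx)))
    · exact (isOpen_lt c1.neg cx).inter (isOpen_lt cx c2)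
  have huniv := hclopen.eq_univ ⟨0, by simpa using h0⟩
  intro t ht
  have hmem : t ∈ {t : ℝ | -h₁ (max t 0) < x (max t 0) ∧ x (max t 0) < h₂ (max t 0)} := by
    rw [huniv]; trivial
  simpa only [Set.mem_ofPred_eq, max_eq_left ht] using hmem
end
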